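/- Let n ≥ 2. Then there exist constants c ∈ (0, 1/2), ε₀ ∈ (0, 1) and C > 0, depending only on n, with the following property. For every ε ∈ (0, ε₀), set V = {x ∈ ℝⁿ : ‖x‖ ≤ c, ‖x − (1+ε)eₙ‖ ≥ 1, ‖x + (1+ε)eₙ‖ ≥ 1}. Suppose u : ℝⁿ → ℝ is C² on an open set containing V, Δu = 0 at every point of the interior of V, and u satisfies the Neumann conditions ⟨∇u(x), x − (1+ε)eₙ⟩ = 0 for every x ∈ V with ‖x − (1+ε)eₙ‖ = 1 and ⟨∇u(x), x + (1+ε)eₙ⟩ = 0 for every x ∈ V with ‖x + (1+ε)eₙ‖ = 1. Then for every x ∈ V, (ε + |x'|²) ‖∇u(x)‖² ≤ C · sup{ ‖∇u(y)‖² + u(y)² : y ∈ V, ‖y‖ = c }. (This is the maximum-principle form of the Bao–Li–Yin estimate |∇u|(x) ≤ C‖φ‖_{C^{1,α}(∂Ω)} (ε+|x'|²)^{−1/2} of Theorem 4.1.) -/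

import Mathlib

open scoped RealInnerProductSpace

section

open Topology Filter Set Metric

theorem IsLocalMax.hasDerivAt_hasDerivAt_nonpos {f f' : ℝ → ℝ} {f'' a : ℝ} (hmax : IsLocalMax f a)
    (hf : ∀ᶠ t in 𝓝 a, HasDerivAt f (f' t) t) (hf' : HasDerivAt f' f'' a) : f'' ≤ 0 := by
  by_contra! hpos
  have hderiv : deriv f =ᶠ[𝓝 a] f' := hf.mono fun t ht => ht.deriv
  have hdd : deriv (deriv f) a = f'' := by rw [hderiv.deriv_eq, hf'.deriv]
  have hmin : IsLocalMin f a :=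
    isLocalMin_of_deriv_deriv_pos (by rwa [hdd]) hmax.deriv_eq_zero hf.self_of_nhds.continuousAt
  have hconst : f =ᶠ[𝓝 a] fun _ => f a := by
    filter_upwards [hmax, hmin] with t h₁ h₂ using le_antisymm h₁ h₂
  have : deriv (deriv f) a = 0 := by
    rw [hconst.deriv.deriv_eq]; simp
  linarith

variable {n : ℕ}

/-- The diagonal quadratic form with coefficients `a`. -/
def diagQuad (a : Fin n → ℝ) (x : EuclideanSpace ℝ (Fin n)) : ℝ := ∑ i, a i * x i ^ 2

theorem diagQuad_add_smul (a : Fin n → ℝ) (x v : EuclideanSpace ℝ (Fin n)) (t : ℝ) :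
    diagQuad a (x + t • v) =
      diagQuad a x + t * (2 * ∑ i, a i * x i * v i) + t ^ 2 * diagQuad a v := by
  simp only [diagQuad, Finset.mul_sum, ← Finset.sum_add_distrib]
  refine Finset.sum_congr rfl fun i _ => ?_
  simp only [PiLp.add_apply, PiLp.smul_apply, smul_eq_mul]
  ring

theorem diagQuad_add_smul_single (a : Fin n → ℝ) (x : EuclideanSpace ℝ (Fin n)) (i : Fin n)
    (t : ℝ) :
    diagQuad a (x + t • EuclideanSpace.single i (1 : ℝ)) =
      diagQuad a x + t * (2 * (a i * x i)) + t ^ 2 * a i := by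
  rw [diagQuad_add_smul]
  simp [diagQuad]

@[fun_prop]
theorem continuous_diagQuad (a : Fin n → ℝ) : Continuous (diagQuad a) := by
  unfold diagQuad
  fun_prop

theorem HasFDerivAt.hasDerivAt_add_smul {f : EuclideanSpace ℝ (Fin n) → ℝ}
    {f' : EuclideanSpace ℝ (Fin n) →L[ℝ] ℝ} {x v : EuclideanSpace ℝ (Fin n)} {t : ℝ}
    (hf : HasFDerivAt f f' (x + t • v)) : HasDerivAt (fun s : ℝ => f (x + s • v)) (f' v) t := by
  have h : HasDerivAt (fun s : ℝ => x + s • v) v t := by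
    simpa using ((hasDerivAt_id t).smul_const v).const_add x
  exact hf.comp_hasDerivAt t h

theorem sum_sq_fderiv_single (u : EuclideanSpace ℝ (Fin n) → ℝ) (x : EuclideanSpace ℝ (Fin n)) :
    ∑ j, fderiv ℝ u x (EuclideanSpace.single j 1) ^ 2 = ‖gradient u x‖ ^ 2 := by
  rw [EuclideanSpace.real_norm_sq_eq]
  refine Finset.sum_congr rfl fun j _ => ?_
  rw [← inner_gradient_left, EuclideanSpace.inner_single_right]
  simp

/-- The pointwise inequality behind the Bernstein-type computation. -/
theorem bernstein_sum_le {F δ η w : ℝ} (hF : 0 < F) {a b x p q v : Fin n → ℝ}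
    {P R : Fin n → Fin n → ℝ} (ha : 0 ≤ ∑ i, a i) (hax : ∑ i, (a i * x i) ^ 2 ≤ 2 * F)
    (hq : ∑ i, q i = 0) (hR : ∀ j, ∑ i, R i j = 0)
    (h : ∀ i, 2 * a i * ∑ j, v j ^ 2 + 2 * (2 * (a i * x i) * ∑ j, 2 * v j * P i j) +
      F * ∑ j, 2 * (P i j ^ 2 + v j * R i j) + 16 * (p i ^ 2 + w * q i) + δ * (2 * b i) -
      2 * η ≤ 0) :
    16 * ∑ i, p i ^ 2 + 2 * δ * ∑ i, b i ≤ 16 * ∑ j, v j ^ 2 + 2 * n * η := by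
  have hsq : ∀ i, -(8 * (a i * x i) ^ 2 / F) * ∑ j, v j ^ 2 ≤
      2 * (2 * (a i * x i) * ∑ j, 2 * v j * P i j) + F * ∑ j, 2 * P i j ^ 2 := by
    intro i
    simp only [Finset.mul_sum, ← Finset.sum_add_distrib]
    refine Finset.sum_le_sum fun j _ => ?_
    have : 0 ≤ 2 * F * (P i j + 2 * (a i * x i) * v j / F) ^ 2 := by positivity
    have e : 2 * F * (P i j + 2 * (a i * x i) * v j / F) ^ 2 =
        2 * (2 * (a i * x i) * (2 * v j * P i j)) + F * (2 * P i j ^ 2) +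
          8 * (a i * x i) ^ 2 / F * v j ^ 2 := by
      field_simp; ring
    linarith
  have hsum : ∑ i, (2 * a i * ∑ j, v j ^ 2 + -(8 * (a i * x i) ^ 2 / F) * ∑ j, v j ^ 2 +
      2 * F * ∑ j, v j * R i j + 16 * (p i ^ 2 + w * q i) + δ * (2 * b i) - 2 * η) ≤ 0 := by
    refine Finset.sum_nonpos fun i _ => ?_
    have e : ∑ j, 2 * (P i j ^ 2 + v j * R i j) =
        ∑ j, 2 * P i j ^ 2 + 2 * ∑ j, v j * R i j := by
      simp only [Finset.mul_sum, ← Finset.sum_add_distrib, mul_add]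
    have := h i
    rw [e] at this
    linarith [hsq i]
  have hRR : ∑ i, ∑ j, v j * R i j = 0 := by
    rw [Finset.sum_comm]
    simp [← Finset.mul_sum, hR]
  have hV : 0 ≤ ∑ j, v j ^ 2 := Finset.sum_nonneg fun j _ => sq_nonneg _
  have key : ∑ i, (2 * a i * ∑ j, v j ^ 2 + -(8 * (a i * x i) ^ 2 / F) * ∑ j, v j ^ 2 +
      2 * F * ∑ j, v j * R i j + 16 * (p i ^ 2 + w * q i) + δ * (2 * b i) - 2 * η) =
      2 * (∑ i, a i) * ∑ j, v j ^ 2 - 8 * (∑ i, (a i * x i) ^ 2) / F * (∑ j, v j ^ 2) +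
      2 * F * ∑ i, ∑ j, v j * R i j + 16 * (∑ i, p i ^ 2 + w * ∑ i, q i) +
      2 * δ * ∑ i, b i - 2 * n * η := by
    generalize ∑ j, v j ^ 2 = S
    simp only [Finset.sum_sub_distrib, Finset.sum_add_distrib, ← Finset.sum_mul, ← Finset.mul_sum,
      Finset.sum_const, Finset.card_univ, Fintype.card_fin, nsmul_eq_mul, Finset.sum_neg_distrib,
      ← Finset.sum_div]
    ring
  rw [key, hRR, hq] at hsum
  have h₁ : 8 * (∑ i, (a i * x i) ^ 2) / F ≤ 16 := by
    rw [div_le_iff₀ hF]; linarith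
  nlinarith [mul_nonneg ha hV, mul_le_mul_of_nonneg_right h₁ hV]

/-- The auxiliary quantity `F |∇u|² + 8 u² + δ w` with `F = ε + ∑ aᵢ xᵢ²` and `w = ∑ bᵢ xᵢ²`. -/
noncomputable def bernsteinQuantity (u : EuclideanSpace ℝ (Fin n) → ℝ) (a b : Fin n → ℝ) (ε δ : ℝ)
    (x : EuclideanSpace ℝ (Fin n)) : ℝ :=
  (ε + diagQuad a x) * ∑ j, fderiv ℝ u x (EuclideanSpace.single j 1) ^ 2 + 8 * u x ^ 2 +
    δ * diagQuad b x

theorem ContDiffOn.differentiableAt_fderiv_apply {u : EuclideanSpace ℝ (Fin n) → ℝ}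
    {U : Set (EuclideanSpace ℝ (Fin n))} (hu : ContDiffOn ℝ 2 u U) (hU : IsOpen U)
    {x : EuclideanSpace ℝ (Fin n)} (hx : x ∈ U) (v : EuclideanSpace ℝ (Fin n)) :
    DifferentiableAt ℝ (fun y => fderiv ℝ u y v) x := by
  have h : ContDiffAt ℝ 1 (fderiv ℝ u) x :=
    (hu.contDiffAt (hU.mem_nhds hx)).fderiv_right (by norm_num)
  exact (h.differentiableAt one_ne_zero).clm_apply (differentiableAt_const v)

/-- On a smaller ball, squared difference quotients of a `C²` function are uniformly close to
squared partial derivatives. -/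
theorem eventually_abs_sq_slope_sub_sq_fderiv_le {u : EuclideanSpace ℝ (Fin n) → ℝ}
    {x₀ : EuclideanSpace ℝ (Fin n)} {r : ℝ} (hr : 0 < r)
    (hu : ContDiffOn ℝ 2 u (ball x₀ (3 * r))) (j : Fin n) {κ : ℝ} (hκ : 0 < κ) :
    ∀ᶠ h in 𝓝[>] (0 : ℝ), ∀ x ∈ closedBall x₀ r,
      |((u (x + h • EuclideanSpace.single j 1) - u x) / h) ^ 2 -
        fderiv ℝ u x (EuclideanSpace.single j 1) ^ 2| ≤ κ := by
  set e : EuclideanSpace ℝ (Fin n) := EuclideanSpace.single j 1 with he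
  have hnorm : ‖e‖ = 1 := by simp [he]
  have hsub : closedBall x₀ (2 * r) ⊆ ball x₀ (3 * r) := closedBall_subset_ball (by linarith)
  have hcont : ContinuousOn (fun y => fderiv ℝ u y e ^ 2) (closedBall x₀ (2 * r)) := fun y hy =>
    ((hu.differentiableAt_fderiv_apply isOpen_ball (hsub hy) e).continuousAt.pow 2).continuousWithinAt
  have hunif := (isCompact_closedBall x₀ (2 * r)).uniformContinuousOn_of_continuous hcont
  obtain ⟨d, hd, hclose⟩ := Metric.uniformContinuousOn_iff.1 hunif κ hκ
  filter_upwards [Ioo_mem_nhdsGT (lt_min hd hr)] with h hh x hx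
  obtain ⟨hh0, hh1⟩ := hh
  have hmem : ∀ t ∈ Icc 0 h, x + t • e ∈ closedBall x₀ (2 * r) := by
    intro t ht
    rw [mem_closedBall] at hx ⊢
    calc dist (x + t • e) x₀ ≤ dist (x + t • e) x + dist x x₀ := dist_triangle _ _ _
      _ = |t| + dist x x₀ := by simp [dist_eq_norm, norm_smul, hnorm]
      _ ≤ 2 * r := by
        rw [abs_of_nonneg ht.1]
        linarith [ht.2, min_le_right d r]
  have hderiv : ∀ t ∈ Icc 0 h,
      HasDerivAt (fun s : ℝ => u (x + s • e)) (fderiv ℝ u (x + t • e) e) t := fun t ht =>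
    HasFDerivAt.hasDerivAt_add_smul (((hu.contDiffAt
      (isOpen_ball.mem_nhds (hsub (hmem t ht)))).differentiableAt two_ne_zero).hasFDerivAt)
  obtain ⟨ξ, hξ, hslope⟩ := exists_hasDerivAt_eq_slope _ _ hh0
    (fun t ht => (hderiv t ht).continuousAt.continuousWithinAt)
    (fun t ht => hderiv t (Ioo_subset_Icc_self ht))
  have hslope' : (u (x + h • e) - u x) / h = fderiv ℝ u (x + ξ • e) e := by
    rw [hslope]; simp
  rw [hslope']
  have hx0 : x ∈ closedBall x₀ (2 * r) := by simpa using hmem 0 ⟨le_rfl, hh0.le⟩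
  refine (hclose _ (hmem ξ (Ioo_subset_Icc_self hξ)) x hx0 ?_).le
  simp only [dist_eq_norm, add_sub_cancel_left, norm_smul, hnorm, mul_one, Real.norm_eq_abs,
    abs_of_pos hξ.1]
  linarith [hξ.2, min_le_left d r]

/-- A function that is a sum of squares of harmonic difference quotients with weight, plus
lower order terms, satisfies the second-derivative inequality at an interior local maximum. -/
theorem bernstein_le_of_isLocalMax {u : EuclideanSpace ℝ (Fin n) → ℝ} {a b : Fin n → ℝ}
    {ε δ η h : ℝ} {W : Set (EuclideanSpace ℝ (Fin n))} (hW : IsOpen W)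
    (hu : ContDiffOn ℝ 2 u W)
    (hharm : ∀ x ∈ W, ∑ i, fderiv ℝ (fun y => fderiv ℝ u y (EuclideanSpace.single i (1 : ℝ))) x
      (EuclideanSpace.single i (1 : ℝ)) = 0)
    (ha : 0 ≤ ∑ i, a i) {x x₀ : EuclideanSpace ℝ (Fin n)} (hx : x ∈ W)
    (hxh : ∀ j, x + h • EuclideanSpace.single j 1 ∈ W)
    (hF : 0 < ε + diagQuad a x) (hax : ∑ i, (a i * x i) ^ 2 ≤ 2 * (ε + diagQuad a x))
    (hmax : IsLocalMax (fun x => (ε + diagQuad a x) *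
      ∑ j, ((u (x + h • EuclideanSpace.single j 1) - u x) / h) ^ 2 + 8 * u x ^ 2 +
      δ * diagQuad b x - η * ‖x - x₀‖ ^ 2) x) :
    16 * ∑ i, fderiv ℝ u x (EuclideanSpace.single i 1) ^ 2 + 2 * δ * ∑ i, b i ≤
      16 * ∑ j, ((u (x + h • EuclideanSpace.single j 1) - u x) / h) ^ 2 + 2 * n * η := by
  have hslice : ∀ (z : EuclideanSpace ℝ (Fin n)) (i : Fin n), z ∈ W → ∀ᶠ t in 𝓝 (0 : ℝ),
      HasDerivAt (fun s : ℝ => u (z + s • EuclideanSpace.single i 1))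
        (fderiv ℝ u (z + t • EuclideanSpace.single i 1) (EuclideanSpace.single i 1)) t := by
    intro z i hz
    have hc : Continuous fun t : ℝ => z + t • EuclideanSpace.single i (1 : ℝ) := by fun_prop
    have : ∀ᶠ t in 𝓝 (0 : ℝ), z + t • EuclideanSpace.single i (1 : ℝ) ∈ W :=
      hc.continuousAt.eventually_mem (hW.mem_nhds (by simpa using hz))
    filter_upwards [this] with t ht
    exact HasFDerivAt.hasDerivAt_add_smul
      (((hu.contDiffAt (hW.mem_nhds ht)).differentiableAt two_ne_zero).hasFDerivAt)
  have hslice' : ∀ (z : EuclideanSpace ℝ (Fin n)) (i : Fin n), z ∈ W →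
      HasDerivAt (fun s : ℝ => fderiv ℝ u (z + s • EuclideanSpace.single i 1)
          (EuclideanSpace.single i 1))
        (fderiv ℝ (fun y => fderiv ℝ u y (EuclideanSpace.single i (1 : ℝ))) z
          (EuclideanSpace.single i (1 : ℝ))) 0 := by
    intro z i hz
    refine HasFDerivAt.hasDerivAt_add_smul (f := fun y => fderiv ℝ u y (EuclideanSpace.single i 1)) ?_
    rw [zero_smul, add_zero]
    exact (hu.differentiableAt_fderiv_apply hW hz _).hasFDerivAt
  have hquad : ∀ (c : Fin n → ℝ) (z : EuclideanSpace ℝ (Fin n)) (i : Fin n) (t : ℝ),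
      HasDerivAt (fun s : ℝ => diagQuad c (z + s • EuclideanSpace.single i 1))
        (2 * c i * (z i + t)) t := by
    intro c z i t
    simp only [diagQuad_add_smul_single]
    refine ((((hasDerivAt_id t).mul_const (2 * (c i * z i))).const_add (diagQuad c z)).fun_add
      ((hasDerivAt_pow 2 t).mul_const (c i))).congr_deriv ?_
    simp; ring
  refine bernstein_sum_le (w := u x) (a := a) (x := x)
    (q := fun i => fderiv ℝ (fun y => fderiv ℝ u y (EuclideanSpace.single i (1 : ℝ))) x
      (EuclideanSpace.single i (1 : ℝ)))
    (P := fun i j => (fderiv ℝ u (x + h • EuclideanSpace.single j 1) (EuclideanSpace.single i 1) -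
      fderiv ℝ u x (EuclideanSpace.single i 1)) / h)
    (R := fun i j => (fderiv ℝ (fun y => fderiv ℝ u y (EuclideanSpace.single i (1 : ℝ)))
        (x + h • EuclideanSpace.single j 1) (EuclideanSpace.single i (1 : ℝ)) -
      fderiv ℝ (fun y => fderiv ℝ u y (EuclideanSpace.single i (1 : ℝ))) x
        (EuclideanSpace.single i (1 : ℝ))) / h)
    hF ha hax (hharm x hx) (fun j => ?_) (fun i => ?_)
  · rw [← Finset.sum_div, Finset.sum_sub_distrib, hharm _ (hxh j), hharm x hx]
    simp
  set e : EuclideanSpace ℝ (Fin n) := EuclideanSpace.single i 1 with he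
  have hline : IsLocalMax (fun t : ℝ => (ε + diagQuad a (x + t • e)) *
      ∑ j, ((u (x + h • EuclideanSpace.single j 1 + t • e) - u (x + t • e)) / h) ^ 2 +
      8 * u (x + t • e) ^ 2 + δ * diagQuad b (x + t • e) -
      η * diagQuad (fun _ => 1) (x - x₀ + t • e)) 0 := by
    have hc : Tendsto (fun t : ℝ => x + t • e) (𝓝 0) (𝓝 x) := by
      have : Continuous fun t : ℝ => x + t • e := by fun_prop
      simpa using this.tendsto 0
    filter_upwards [hc.eventually hmax] with t ht
    simpa only [diagQuad, one_mul, ← EuclideanSpace.real_norm_sq_eq, zero_smul, add_zero,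
      add_right_comm _ _ (t • e), add_sub_right_comm] using ht
  refine hline.hasDerivAt_hasDerivAt_nonpos (f' := fun t => 
      2 * a i * (x i + t) *
        ∑ j, ((u (x + h • EuclideanSpace.single j 1 + t • e) - u (x + t • e)) / h) ^ 2 +
      (ε + diagQuad a (x + t • e)) *
        ∑ j, 2 * ((u (x + h • EuclideanSpace.single j 1 + t • e) - u (x + t • e)) / h) *
          ((fderiv ℝ u (x + h • EuclideanSpace.single j 1 + t • e) e -
            fderiv ℝ u (x + t • e) e) / h) +
      16 * (u (x + t • e) * fderiv ℝ u (x + t • e) e) + δ * (2 * b i * (x i + t)) -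
      η * (2 * 1 * ((x - x₀) i + t))) ?_ ?_
  · filter_upwards [hslice x i hx, eventually_all.2 fun j => hslice _ i (hxh j)] with t h₁ h₂
    have hS := HasDerivAt.fun_sum (u := Finset.univ) fun j _ => 
      (((h₂ j).fun_sub h₁).div_const h).fun_pow 2
    refine (((((hquad a x i t).const_add ε).fun_mul hS).fun_add
      ((h₁.fun_pow 2).const_mul 8)).fun_add ((hquad b x i t).const_mul δ) |>.fun_sub
      ((hquad (fun _ => 1) (x - x₀) i t).const_mul η)).congr_deriv ?_
    simp only [Nat.cast_ofNat, Nat.add_one_sub_one, pow_one, ← he]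
    ring
  · have h₁ := (hslice x i hx).self_of_nhds
    have h₂ := fun j => (hslice _ i (hxh j)).self_of_nhds
    have h₁' := hslice' x i hx
    have h₂' := fun j => hslice' _ i (hxh j)
    have hS := HasDerivAt.fun_sum (u := Finset.univ) fun j _ =>
      (((h₂ j).fun_sub h₁).div_const h).fun_pow 2
    have hS' := HasDerivAt.fun_sum (u := Finset.univ) fun j _ =>
      ((((h₂ j).fun_sub h₁).div_const h).const_mul 2).fun_mul (((h₂' j).fun_sub h₁').div_const h)
    have hlin : ∀ k m : ℝ, HasDerivAt (fun t : ℝ => k * (m + t)) k 0 := fun k m => by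
      simpa using ((hasDerivAt_id (0 : ℝ)).const_add m).const_mul k
    refine ((((((hlin (2 * a i) (x i)).fun_mul hS).fun_add
      (((hquad a x i 0).const_add ε).fun_mul hS')).fun_add ((h₁.fun_mul h₁').const_mul 16)).fun_add
      ((hlin (2 * b i) (x i)).const_mul δ)).fun_sub
      ((hlin (2 * 1) ((x - x₀) i)).const_mul η)).congr_deriv ?_
    simp only [Nat.cast_ofNat, Nat.add_one_sub_one, pow_one, zero_smul, add_zero, ← he]
    have e₁ : ∀ y z w s : Fin n → ℝ, ∑ j, (2 * y j * z j + 2 * w j * s j) =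
      ∑ j, 2 * (y j * z j + w j * s j) := fun y z w s => by
        refine Finset.sum_congr rfl fun j _ => by ring
    simp only [e₁, ← pow_two]
    ring

/-- The auxiliary quantity has no interior local maximum. -/
theorem exists_bernsteinQuantity_lt {u : EuclideanSpace ℝ (Fin n) → ℝ} {a b : Fin n → ℝ}
    {ε δ r : ℝ} {x₀ : EuclideanSpace ℝ (Fin n)} (hr : 0 < r) (hδ : 0 < δ)
    (hu : ContDiffOn ℝ 2 u (ball x₀ (3 * r)))
    (hharm : ∀ x ∈ ball x₀ (3 * r),
      ∑ i, fderiv ℝ (fun y => fderiv ℝ u y (EuclideanSpace.single i (1 : ℝ))) x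
        (EuclideanSpace.single i (1 : ℝ)) = 0)
    (ha : 0 ≤ ∑ i, a i) (hb : 1 ≤ 2 * ∑ i, b i)
    (hF : ∀ x ∈ ball x₀ (3 * r), 0 < ε + diagQuad a x)
    (hax : ∀ x ∈ ball x₀ (3 * r), ∑ i, (a i * x i) ^ 2 ≤ 2 * (ε + diagQuad a x)) :
    ∃ x ∈ ball x₀ (3 * r), bernsteinQuantity u a b ε δ x₀ < bernsteinQuantity u a b ε δ x := by
  by_contra! hmax
  have hn : 0 < (n : ℝ) := by
    rcases Nat.eq_zero_or_pos n with rfl | h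
    · norm_num at hb
    · exact_mod_cast h
  set K := closedBall x₀ r with hK
  have hKsub : K ⊆ ball x₀ (3 * r) := closedBall_subset_ball (by linarith)
  have hx₀K : x₀ ∈ K := mem_closedBall_self hr.le
  obtain ⟨xM, -, hM⟩ := (isCompact_closedBall x₀ r).exists_isMaxOn ⟨x₀, hx₀K⟩
    (f := fun x => ε + diagQuad a x) (by fun_prop)
  set M := ε + diagQuad a xM with hMdef
  have hMle : ∀ x ∈ K, ε + diagQuad a x ≤ M := fun x hx => hM hx
  have hMpos : 0 < M := (hF x₀ (hKsub hx₀K)).trans_le (hMle x₀ hx₀K)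
  set η := δ / (4 * n) with hηdef
  have hη : 0 < η := by positivity
  have hnη : 2 * n * η = δ / 2 := by rw [hηdef]; field_simp; ring
  set κ := min (δ / 64) (η * r ^ 2 / (4 * M)) with hκdef
  have hκ : 0 < κ := lt_min (by positivity) (by positivity)
  have hκ₁ : κ ≤ δ / 64 := min_le_left _ _
  have hκ₂ : M * κ ≤ η * r ^ 2 / 4 := by
    have := mul_le_mul_of_nonneg_left (min_le_right (δ / 64) (η * r ^ 2 / (4 * M))) hMpos.le
    refine this.trans_eq ?_
    field_simp
  obtain ⟨h, happrox, hh0, hhr⟩ := ((eventually_all.2 fun j =>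
    eventually_abs_sq_slope_sub_sq_fderiv_le hr hu j (div_pos hκ hn)).and
    (Ioo_mem_nhdsGT hr)).exists
  have hclose : ∀ x ∈ K, |∑ j, ((u (x + h • EuclideanSpace.single j 1) - u x) / h) ^ 2 -
      ∑ j, fderiv ℝ u x (EuclideanSpace.single j 1) ^ 2| ≤ κ := by
    intro x hx
    rw [← Finset.sum_sub_distrib]
    refine (Finset.abs_sum_le_sum_abs _ _).trans ((Finset.sum_le_sum fun j _ =>
      happrox j x hx).trans_eq ?_)
    simp only [Finset.sum_const, Finset.card_univ, Fintype.card_fin, nsmul_eq_mul]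
    field_simp
  have hshift : ∀ x ∈ K, ∀ j, x + h • EuclideanSpace.single j (1 : ℝ) ∈ ball x₀ (3 * r) := by
    intro x hx j
    rw [hK, mem_closedBall] at hx
    rw [mem_ball]
    calc dist (x + h • EuclideanSpace.single j (1 : ℝ)) x₀
        ≤ dist (x + h • EuclideanSpace.single j (1 : ℝ)) x + dist x x₀ := dist_triangle _ _ _
      _ = h + dist x x₀ := by simp [dist_eq_norm, norm_smul, abs_of_pos hh0]
      _ < 3 * r := by linarith
  set g : EuclideanSpace ℝ (Fin n) → ℝ := fun x => (ε + diagQuad a x) *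
      ∑ j, ((u (x + h • EuclideanSpace.single j 1) - u x) / h) ^ 2 + 8 * u x ^ 2 +
      δ * diagQuad b x - η * ‖x - x₀‖ ^ 2 with hg
  have hgcont : ContinuousOn g K := by
    have huc : ContinuousOn u K := hu.continuousOn.mono hKsub
    have hshc : ∀ j, ContinuousOn (fun x => u (x + h • EuclideanSpace.single j (1 : ℝ))) K :=
      fun j => hu.continuousOn.comp (by fun_prop) fun x hx => hshift x hx j
    have hsum : ContinuousOn
        (fun x => ∑ j, ((u (x + h • EuclideanSpace.single j (1 : ℝ)) - u x) / h) ^ 2) K :=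
      continuousOn_finsetSum _ fun j _ => (((hshc j).sub huc).div_const h).pow 2
    have hquad : ∀ c : Fin n → ℝ, ContinuousOn (diagQuad c) K := fun c =>
      (continuous_diagQuad c).continuousOn
    exact (((continuousOn_const.add (hquad a)).mul hsum).add
      (continuousOn_const.mul (huc.pow 2))).add (continuousOn_const.mul (hquad b)) |>.sub
      (by fun_prop)
  have habs : ∀ x ∈ K,
      |g x - (bernsteinQuantity u a b ε δ x - η * ‖x - x₀‖ ^ 2)| ≤ η * r ^ 2 / 4 := by
    intro x hx
    have e : g x - (bernsteinQuantity u a b ε δ x - η * ‖x - x₀‖ ^ 2) = (ε + diagQuad a x) *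
        (∑ j, ((u (x + h • EuclideanSpace.single j 1) - u x) / h) ^ 2 -
          ∑ j, fderiv ℝ u x (EuclideanSpace.single j 1) ^ 2) := by
      simp only [hg, bernsteinQuantity]; ring
    rw [e, abs_mul, abs_of_pos (hF x (hKsub hx))]
    exact (mul_le_mul (hMle x hx) (hclose x hx) (abs_nonneg _) hMpos.le).trans hκ₂
  obtain ⟨x₁, hx₁K, hx₁⟩ := (isCompact_closedBall x₀ r).exists_isMaxOn ⟨x₀, hx₀K⟩ hgcont
  have hx₁ball : x₁ ∈ ball x₀ r := by
    by_contra hcon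
    have hdist : ‖x₁ - x₀‖ = r := by
      rw [← dist_eq_norm]
      exact le_antisymm (mem_closedBall.1 hx₁K) (not_lt.1 hcon)
    have h₀ := abs_le.1 (habs x₀ hx₀K)
    have h₁ := abs_le.1 (habs x₁ hx₁K)
    rw [hdist] at h₁
    simp only [sub_self, norm_zero] at h₀
    have h₂ : g x₀ ≤ g x₁ := hx₁ hx₀K
    have h₃ := hmax x₁ (hKsub hx₁K)
    have : 0 < η * r ^ 2 := by positivity
    linarith [h₀.1, h₁.2]
  have hlocal : IsLocalMax g x₁ := by
    filter_upwards [isOpen_ball.mem_nhds hx₁ball] with x hx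
    exact hx₁ (ball_subset_closedBall hx)
  have hfinal := bernstein_le_of_isLocalMax isOpen_ball hu hharm ha (hKsub hx₁K)
    (hshift x₁ hx₁K) (hF x₁ (hKsub hx₁K)) (hax x₁ (hKsub hx₁K)) hlocal
  have hc := (abs_le.1 (hclose x₁ hx₁K)).2
  nlinarith [mul_le_mul_of_nonneg_left hb hδ.le]

theorem HasDerivAt.nonpos_of_eventually_le {f : ℝ → ℝ} {f' : ℝ} (hf : HasDerivAt f f' 0)
    (h : ∀ᶠ t in 𝓝[>] (0 : ℝ), f t ≤ f 0) : f' ≤ 0 := by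
  refine le_of_tendsto hf.tendsto_slope_zero_right ?_
  filter_upwards [h, self_mem_nhdsWithin] with t ht ht0
  have ht0 : 0 < t := ht0
  rw [zero_add, smul_eq_mul]
  exact mul_nonpos_of_nonneg_of_nonpos (inv_pos.2 ht0).le (by linarith)

/-- Normal derivative of half the squared gradient on a unit sphere where the Neumann
condition holds. -/
theorem sum_fderiv_mul_normal_eq {u : EuclideanSpace ℝ (Fin n) → ℝ}
    {x p : EuclideanSpace ℝ (Fin n)} (hu : ContDiffAt ℝ 2 u x) (hx : ‖x - p‖ = 1)
    (hneu : ∀ᶠ y in 𝓝 x, ‖y - p‖ = 1 → ⟪gradient u y, y - p⟫ = 0) :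
    ∑ j, fderiv ℝ u x (EuclideanSpace.single j 1) *
      fderiv ℝ (fun y => fderiv ℝ u y (EuclideanSpace.single j 1)) x (x - p) =
      -∑ j, fderiv ℝ u x (EuclideanSpace.single j 1) ^ 2 := by
  set N := x - p with hN
  set g := gradient u x with hg
  set D := fderiv ℝ (fderiv ℝ u) x with hD
  have hdd : DifferentiableAt ℝ (fderiv ℝ u) x :=
    (hu.fderiv_right (m := 1) (by norm_num)).differentiableAt one_ne_zero
  have hsymm : ∀ v w, D v w = D w v := fun v w =>
    (hu.isSymmSndFDerivAt (by simp)).eq v w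
  have hpart : ∀ v w, fderiv ℝ (fun y => fderiv ℝ u y v) x w = D w v := fun v w => by
    have := (hdd.hasFDerivAt.clm_apply (hasFDerivAt_const v x)).fderiv
    rw [this]; simp [hD]
  have hgj : ∀ j, fderiv ℝ u x (EuclideanSpace.single j 1) = g j := fun j => by
    rw [← inner_gradient_left, EuclideanSpace.inner_single_right]; simp [hg]
  have hgsum : ∑ j, g j • EuclideanSpace.single j (1 : ℝ) = g := by
    ext i
    simp [Pi.single_apply]
  have hDg : ∑ j, g j * D N (EuclideanSpace.single j 1) = D N g := by
    conv_rhs => rw [← hgsum]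
    simp
  have hgN : ⟪N, g⟫ = 0 := by
    rw [real_inner_comm]; exact hneu.self_of_nhds hx
  set s := ‖g‖ ^ 2 / 4 with hs
  have hs0 : 0 ≤ s := by positivity
  set γ : ℝ → EuclideanSpace ℝ (Fin n) := fun t =>
    p + (1 + t ^ 2 * s)⁻¹ • ((1 - t ^ 2 * s) • N + t • g) with hγ
  have hγ0 : γ 0 = x := by simp [hγ, hN]
  have hγ' : HasDerivAt γ g 0 := by
    have h₁ : HasDerivAt (fun t : ℝ => t ^ 2 * s) 0 0 := by
      simpa using (hasDerivAt_pow 2 (0 : ℝ)).mul_const s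
    have h₂ : HasDerivAt (fun t : ℝ => (1 + t ^ 2 * s)⁻¹) 0 0 := by
      simpa using (h₁.const_add 1).fun_inv (by norm_num)
    have h₃ := ((h₁.const_sub 1).smul_const N).fun_add ((hasDerivAt_id (0 : ℝ)).smul_const g)
    simpa [hγ] using (h₂.fun_smul h₃).const_add p
  have hγnorm : ∀ t, ‖γ t - p‖ = 1 := by
    intro t
    have hpos : 0 < 1 + t ^ 2 * s := by positivity
    have h₁ : ‖(1 - t ^ 2 * s) • N + t • g‖ ^ 2 = (1 + t ^ 2 * s) ^ 2 := by
      rw [norm_add_sq_real, norm_smul, norm_smul, inner_smul_left, inner_smul_right, hgN, hx,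
        mul_pow, mul_pow, Real.norm_eq_abs, Real.norm_eq_abs, sq_abs, sq_abs, hs]
      simp; ring
    have h₂ := (sq_eq_sq₀ (norm_nonneg _) hpos.le).1 h₁
    simp only [hγ, add_sub_cancel_left]
    rw [norm_smul, h₂, norm_inv, Real.norm_of_nonneg hpos.le, inv_mul_cancel₀ hpos.ne']
  have hcomp := (hdd.hasFDerivAt.clm_apply
    ((hasFDerivAt_id x).sub_const p)).comp_hasDerivAt_of_eq (0 : ℝ) hγ' hγ0.symm
  have hzero : ((fun y => fderiv ℝ u y (y - p)) ∘ γ) =ᶠ[𝓝 0] fun _ => 0 := by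
    have hc : Tendsto γ (𝓝 0) (𝓝 x) := by
      have := hγ'.continuousAt.tendsto
      rwa [hγ0] at this
    filter_upwards [hc.eventually hneu] with t ht
    have := ht (hγnorm t)
    rwa [inner_gradient_left] at this
  have hval := hcomp.unique ((hasDerivAt_const (0 : ℝ) (0 : ℝ)).congr_of_eventuallyEq hzero)
  have hgg : fderiv ℝ u x g = ‖g‖ ^ 2 := by
    rw [← inner_gradient_left, real_inner_self_eq_norm_sq]
  simp only [hpart, hgj, hDg, hsymm N g]
  rw [← EuclideanSpace.real_norm_sq_eq, ← hgg]
  simp only [id, add_apply, ContinuousLinearMap.comp_apply,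
    ContinuousLinearMap.flip_apply, ContinuousLinearMap.id_apply, ← hN, ← hD] at hval
  linarith

/-- The derivative of the auxiliary quantity in the direction normal to a unit sphere on which
the Neumann condition holds. -/
theorem hasDerivAt_bernsteinQuantity_normal {u : EuclideanSpace ℝ (Fin n) → ℝ}
    {x p : EuclideanSpace ℝ (Fin n)} (hu : ContDiffAt ℝ 2 u x) (hx : ‖x - p‖ = 1)
    (hneu : ∀ᶠ y in 𝓝 x, ‖y - p‖ = 1 → ⟪gradient u y, y - p⟫ = 0) (a b : Fin n → ℝ) (ε δ : ℝ) :
    HasDerivAt (fun t : ℝ => bernsteinQuantity u a b ε δ (x + t • (x - p)))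
      ((2 * ∑ i, a i * x i * (x - p) i - 2 * (ε + diagQuad a x)) * ‖gradient u x‖ ^ 2 +
        δ * (2 * ∑ i, b i * x i * (x - p) i)) 0 := by
  have hsum := sum_fderiv_mul_normal_eq hu hx hneu
  have hperp : fderiv ℝ u x (x - p) = 0 := by
    rw [← inner_gradient_left]; exact hneu.self_of_nhds hx
  set N := x - p with hN
  have hdd : DifferentiableAt ℝ (fderiv ℝ u) x :=
    (hu.fderiv_right (m := 1) (by norm_num)).differentiableAt one_ne_zero
  have hquad : ∀ c : Fin n → ℝ, HasDerivAt (fun t : ℝ => diagQuad c (x + t • N))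
      (2 * ∑ i, c i * x i * N i) 0 := by
    intro c
    simp only [diagQuad_add_smul]
    refine ((((hasDerivAt_id (0 : ℝ)).mul_const (2 * ∑ i, c i * x i * N i)).const_add
      (diagQuad c x)).fun_add ((hasDerivAt_pow 2 (0 : ℝ)).mul_const (diagQuad c N))).congr_deriv ?_
    simp
  have hx0 : x + (0 : ℝ) • N = x := by simp
  have hu' : HasDerivAt (fun t : ℝ => u (x + t • N)) 0 0 := by
    refine HasDerivAt.congr_deriv (HasFDerivAt.hasDerivAt_add_smul ?_) hperp
    rw [hx0]
    exact (hu.differentiableAt two_ne_zero).hasFDerivAt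
  have hp : ∀ j, HasDerivAt
      (fun t : ℝ => fderiv ℝ u (x + t • N) (EuclideanSpace.single j 1))
      (fderiv ℝ (fun y => fderiv ℝ u y (EuclideanSpace.single j 1)) x N) 0 := by
    intro j
    refine HasFDerivAt.hasDerivAt_add_smul
      (f := fun y => fderiv ℝ u y (EuclideanSpace.single j 1)) ?_
    rw [hx0]
    exact (hdd.clm_apply (differentiableAt_const _)).hasFDerivAt
  have hS := HasDerivAt.fun_sum (u := Finset.univ) fun j _ => (hp j).fun_pow 2
  refine (((((hquad a).const_add ε).fun_mul hS).fun_add ((hu'.fun_pow 2).const_mul 8)).fun_add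
    ((hquad b).const_mul δ)).congr_deriv ?_
  simp only [hx0, Nat.cast_ofNat, Nat.add_one_sub_one, pow_one, mul_assoc, ← Finset.mul_sum, hsum,
    sum_sq_fderiv_single]
  ring

/-- The auxiliary quantity has no maximum at a boundary point where the Neumann condition holds
on a unit sphere and the weights increase fast enough in the normal direction. -/
theorem exists_bernsteinQuantity_lt_of_neumann {u : EuclideanSpace ℝ (Fin n) → ℝ}
    {V : Set (EuclideanSpace ℝ (Fin n))} {x p : EuclideanSpace ℝ (Fin n)}
    (hu : ContDiffAt ℝ 2 u x) (hx : ‖x - p‖ = 1) (hV : ∀ᶠ y in 𝓝 x, 1 ≤ ‖y - p‖ → y ∈ V)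
    (hneu : ∀ y ∈ V, ‖y - p‖ = 1 → ⟪gradient u y, y - p⟫ = 0) {a b : Fin n → ℝ} {ε δ : ℝ}
    (hδ : 0 < δ) (ha : ε + diagQuad a x ≤ ∑ i, a i * x i * (x - p) i)
    (hb : 0 < ∑ i, b i * x i * (x - p) i) :
    ∃ y ∈ V, bernsteinQuantity u a b ε δ x < bernsteinQuantity u a b ε δ y := by
  by_contra! hmax
  have hderiv := hasDerivAt_bernsteinQuantity_normal hu hx
    (hV.mono fun y hy h => hneu y (hy h.ge) h) a b ε δ
  have hc : Tendsto (fun t : ℝ => x + t • (x - p)) (𝓝[>] 0) (𝓝 x) := by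
    have : Continuous fun t : ℝ => x + t • (x - p) := by fun_prop
    simpa using (this.tendsto 0).mono_left nhdsWithin_le_nhds
  have hnonpos := hderiv.nonpos_of_eventually_le (by
    filter_upwards [hc.eventually hV, self_mem_nhdsWithin] with t ht ht0
    have ht0 : 0 < t := ht0
    rw [zero_smul, add_zero]
    refine hmax _ (ht ?_)
    have e : x + t • (x - p) - p = (1 + t) • (x - p) := by module
    rw [e, norm_smul, hx, Real.norm_of_nonneg (by linarith)]
    linarith)
  have h₁ : 0 ≤ (2 * ∑ i, a i * x i * (x - p) i - 2 * (ε + diagQuad a x)) *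
      ‖gradient u x‖ ^ 2 := mul_nonneg (by linarith) (by positivity)
  have h₂ : 0 < δ * (2 * ∑ i, b i * x i * (x - p) i) := by positivity
  linarith

theorem sum_ite_mul_eq_sum_erase_add (k : Fin n) (c : ℝ) (f : Fin n → ℝ) :
    ∑ i, (if i = k then c else 1) * f i = ∑ i ∈ Finset.univ.erase k, f i + c * f k := by
  rw [← Finset.sum_erase_add _ _ (Finset.mem_univ k), if_pos rfl]
  congr 1
  exact Finset.sum_congr rfl fun i hi => by rw [if_neg (Finset.ne_of_mem_erase hi), one_mul]

theorem norm_sq_eq_sum_erase_add (k : Fin n) (x : EuclideanSpace ℝ (Fin n)) :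
    ‖x‖ ^ 2 = ∑ i ∈ Finset.univ.erase k, x i ^ 2 + x k ^ 2 := by
  rw [EuclideanSpace.real_norm_sq_eq, Finset.sum_erase_add _ _ (Finset.mem_univ k)]

theorem norm_sub_smul_single_sq (k : Fin n) (s : ℝ) (x : EuclideanSpace ℝ (Fin n)) :
    ‖x - s • EuclideanSpace.single k (1 : ℝ)‖ ^ 2 = ‖x‖ ^ 2 - 2 * s * x k + s ^ 2 := by
  rw [norm_sub_sq_real, inner_smul_right, EuclideanSpace.inner_single_right, norm_smul]
  simp
  ring

theorem sum_ite_mul_mul_sub_single (k : Fin n) (c s : ℝ) (x : EuclideanSpace ℝ (Fin n)) :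
    ∑ i, (if i = k then c else 1) * x i * (x - s • EuclideanSpace.single k (1 : ℝ)) i =
      ∑ i ∈ Finset.univ.erase k, x i ^ 2 + c * (x k * (x k - s)) := by
  simp only [mul_assoc]
  rw [sum_ite_mul_eq_sum_erase_add]
  congr 1
  · refine Finset.sum_congr rfl fun i hi => ?_
    simp [Finset.ne_of_mem_erase hi, pow_two]
  · simp

theorem ContDiffOn.continuousOn_bernsteinQuantity {u : EuclideanSpace ℝ (Fin n) → ℝ}
    {U : Set (EuclideanSpace ℝ (Fin n))} (hu : ContDiffOn ℝ 2 u U) (hU : IsOpen U)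
    (a b : Fin n → ℝ) (ε δ : ℝ) : ContinuousOn (bernsteinQuantity u a b ε δ) U := by
  have hsum : ContinuousOn
      (fun x => ∑ j, fderiv ℝ u x (EuclideanSpace.single j (1 : ℝ)) ^ 2) U :=
    continuousOn_finsetSum _ fun j _ x hx =>
      ((hu.differentiableAt_fderiv_apply hU hx _).continuousAt.pow 2).continuousWithinAt
  have hquad : ∀ c : Fin n → ℝ, ContinuousOn (diagQuad c) U := fun c =>
    (continuous_diagQuad c).continuousOn
  exact (((continuousOn_const.add (hquad a)).mul hsum).add
    (continuousOn_const.mul (hu.continuousOn.pow 2))).add (continuousOn_const.mul (hquad b))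

theorem add_smul_single_eq_sub (k : Fin n) (s : ℝ) (x : EuclideanSpace ℝ (Fin n)) :
    x + s • EuclideanSpace.single k (1 : ℝ) = x - (-s) • EuclideanSpace.single k (1 : ℝ) := by
  module

theorem diagQuad_ite (k : Fin n) (c : ℝ) (x : EuclideanSpace ℝ (Fin n)) :
    diagQuad (fun i => if i = k then c else 1) x =
      ∑ i ∈ Finset.univ.erase k, x i ^ 2 + c * x k ^ 2 :=
  sum_ite_mul_eq_sum_erase_add k c fun i => x i ^ 2

theorem isCompact_narrowRegion (k : Fin n) (ε : ℝ) :
    IsCompact {x : EuclideanSpace ℝ (Fin n) | ‖x‖ ≤ 1 / 4 ∧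
      1 ≤ ‖x - (1 + ε) • EuclideanSpace.single k (1 : ℝ)‖ ∧
      1 ≤ ‖x + (1 + ε) • EuclideanSpace.single k (1 : ℝ)‖} := by
  refine (isCompact_closedBall (0 : EuclideanSpace ℝ (Fin n)) (1 / 4)).of_isClosed_subset ?_
    fun x hx => by simpa using hx.1
  simp only [ofPred_and]
  refine IsClosed.inter ?_ (IsClosed.inter ?_ ?_) <;>
    exact isClosed_le (by fun_prop) (by fun_prop)

/-- In the narrow region between the balls the last coordinate is controlled by `ε + |x'|²`. -/
theorem sq_apply_le_of_mem_narrowRegion {k : Fin n} {ε : ℝ} (hε : 0 < ε) (hε' : ε < 1 / 4)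
    {x : EuclideanSpace ℝ (Fin n)}
    (hx : ‖x‖ ≤ 1 / 4 ∧ 1 ≤ ‖x - (1 + ε) • EuclideanSpace.single k (1 : ℝ)‖ ∧
      1 ≤ ‖x + (1 + ε) • EuclideanSpace.single k (1 : ℝ)‖) :
    x k ^ 2 ≤ (ε + ∑ i ∈ Finset.univ.erase k, x i ^ 2) / 3 := by
  obtain ⟨h₁, h₂, h₃⟩ := hx
  replace h₁ := pow_le_pow_left₀ (norm_nonneg _) h₁ 2
  replace h₂ := pow_le_pow_left₀ zero_le_one h₂ 2
  replace h₃ := pow_le_pow_left₀ zero_le_one h₃ 2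
  rw [add_smul_single_eq_sub] at h₃
  rw [norm_sub_smul_single_sq] at h₂ h₃
  rw [norm_sq_eq_sum_erase_add k] at h₁ h₂ h₃
  have hT : 0 ≤ ∑ i ∈ Finset.univ.erase k, x i ^ 2 := Finset.sum_nonneg fun i _ => sq_nonneg _
  generalize ∑ i ∈ Finset.univ.erase k, x i ^ 2 = T at *
  generalize x k = z at *
  have habs : |z| ≤ 1 / 4 := abs_le_of_sq_le_sq (by linarith) (by norm_num)
  have hsq : z ^ 2 = |z| * |z| := by rw [← pow_two, sq_abs]
  have hlin : 2 * (1 + ε) * |z| ≤ T + z ^ 2 + 2 * ε + ε ^ 2 := by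
    rcases abs_cases z with ⟨h, -⟩ | ⟨h, -⟩ <;> rw [h] <;> linarith
  have h₀ := abs_nonneg z
  have hz : |z| ≤ 9 / 7 * (ε + T) := by nlinarith
  nlinarith

/-- The maximum principle for the auxiliary quantity: on the narrow region its maximum is attained
on the sphere `‖x‖ = 1/4`. -/
theorem exists_norm_eq_isMaxOn_bernsteinQuantity {k : Fin n} (hn : 2 ≤ n) {ε δ : ℝ} (hε : 0 < ε)
    (hε' : ε < 1 / 4) (hδ : 0 < δ) {u : EuclideanSpace ℝ (Fin n) → ℝ}
    {U V : Set (EuclideanSpace ℝ (Fin n))}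
    (hV : V = {x | ‖x‖ ≤ 1 / 4 ∧ 1 ≤ ‖x - (1 + ε) • EuclideanSpace.single k (1 : ℝ)‖ ∧
      1 ≤ ‖x + (1 + ε) • EuclideanSpace.single k (1 : ℝ)‖})
    (hU : IsOpen U) (hVU : V ⊆ U) (hu : ContDiffOn ℝ 2 u U)
    (hharm : ∀ x ∈ interior V,
      ∑ i, fderiv ℝ (fun y => fderiv ℝ u y (EuclideanSpace.single i (1 : ℝ))) x
        (EuclideanSpace.single i (1 : ℝ)) = 0)
    (hneu : ∀ x ∈ V, ‖x - (1 + ε) • EuclideanSpace.single k (1 : ℝ)‖ = 1 →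
      ⟪gradient u x, x - (1 + ε) • EuclideanSpace.single k (1 : ℝ)⟫ = 0)
    (hneu' : ∀ x ∈ V, ‖x + (1 + ε) • EuclideanSpace.single k (1 : ℝ)‖ = 1 →
      ⟪gradient u x, x + (1 + ε) • EuclideanSpace.single k (1 : ℝ)⟫ = 0)
    (hne : V.Nonempty) :
    ∃ x ∈ V, ‖x‖ = 1 / 4 ∧ IsMaxOn (bernsteinQuantity u (fun i => if i = k then -1 else 1)
      (fun i => if i = k then -1 / 2 else 1) ε δ) V x := by
  have hcompact : IsCompact V := hV ▸ isCompact_narrowRegion k ε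
  obtain ⟨x, hxV, hx⟩ := hcompact.exists_isMaxOn hne
    ((hu.continuousOn_bernsteinQuantity hU (fun i => if i = k then -1 else 1)
      (fun i => if i = k then -1 / 2 else 1) ε δ).mono hVU)
  refine ⟨x, hxV, ?_, hx⟩
  have hmem : ∀ y ∈ V, ‖y‖ ≤ 1 / 4 ∧ 1 ≤ ‖y - (1 + ε) • EuclideanSpace.single k (1 : ℝ)‖ ∧
      1 ≤ ‖y + (1 + ε) • EuclideanSpace.single k (1 : ℝ)‖ := fun y hy => by rwa [hV] at hy
  by_contra hnorm
  have hlt : ‖x‖ < 1 / 4 := lt_of_le_of_ne (hmem x hxV).1 hnorm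
  have hnorm_nhds : ∀ᶠ y in 𝓝 x, ‖y‖ < 1 / 4 :=
    continuous_norm.continuousAt.eventually_lt continuousAt_const hlt
  have hT : ∀ y : EuclideanSpace ℝ (Fin n), 0 ≤ ∑ i ∈ Finset.univ.erase k, y i ^ 2 :=
    fun y => Finset.sum_nonneg fun i _ => sq_nonneg _
  have hadd := fun y => add_smul_single_eq_sub k (1 + ε) y
  have hlast : ∀ y ∈ V, y k ^ 2 ≤ (ε + ∑ i ∈ Finset.univ.erase k, y i ^ 2) / 3 := fun y hy =>
    sq_apply_le_of_mem_narrowRegion hε hε' (hmem y hy)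
  have hboundary : ∀ s : ℝ, s ^ 2 = (1 + ε) ^ 2 →
      ‖x - s • EuclideanSpace.single k (1 : ℝ)‖ = 1 →
      (∀ y ∈ V, ‖y - s • EuclideanSpace.single k (1 : ℝ)‖ = 1 →
        ⟪gradient u y, y - s • EuclideanSpace.single k (1 : ℝ)⟫ = 0) →
      (∀ y, ‖y‖ ≤ 1 / 4 → 1 ≤ ‖y - s • EuclideanSpace.single k (1 : ℝ)‖ →
        1 ≤ ‖y - (-s) • EuclideanSpace.single k (1 : ℝ)‖ → y ∈ V) → False := by
    intro s hs hxs hneus hVs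
    have hsq : ‖x‖ ^ 2 - 2 * s * x k + s ^ 2 = 1 := by
      rw [← norm_sub_smul_single_sq, hxs]; norm_num
    have hopp : 1 < ‖x - (-s) • EuclideanSpace.single k (1 : ℝ)‖ := by
      refine lt_of_pow_lt_pow_left₀ 2 (norm_nonneg _) ?_
      rw [norm_sub_smul_single_sq]
      nlinarith [sq_nonneg ‖x‖]
    have hnhds : ∀ᶠ y in 𝓝 x, 1 ≤ ‖y - s • EuclideanSpace.single k (1 : ℝ)‖ → y ∈ V := by
      have hc : Continuous fun y : EuclideanSpace ℝ (Fin n) =>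
        ‖y - (-s) • EuclideanSpace.single k (1 : ℝ)‖ := by fun_prop
      filter_upwards [hnorm_nhds, continuousAt_const.eventually_lt hc.continuousAt hopp]
        with y hy₁ hy₂ hy₃
      exact hVs y hy₁.le hy₃ hy₂.le
    have hTx := hT x
    have hxk := hlast x hxV
    rw [norm_sq_eq_sum_erase_add k] at hsq
    obtain ⟨y, hyV, hy⟩ := exists_bernsteinQuantity_lt_of_neumann
      (hu.contDiffAt (hU.mem_nhds (hVU hxV))) hxs hnhds hneus
      (a := fun i => if i = k then -1 else 1) (b := fun i => if i = k then -1 / 2 else 1)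
      (ε := ε) hδ
      (by rw [sum_ite_mul_mul_sub_single, diagQuad_ite]; nlinarith)
      (by rw [sum_ite_mul_mul_sub_single]; nlinarith)
    exact absurd (hx hyV) (not_le.2 hy)
  obtain ⟨-, hp, hm⟩ := hmem x hxV
  rcases hp.eq_or_lt with hp | hp
  · refine hboundary (1 + ε) rfl hp.symm hneu fun y h₁ h₂ h₃ => ?_
    rw [hV]
    exact ⟨h₁, h₂, by rwa [hadd]⟩
  rcases hm.eq_or_lt with hm | hm
  · simp only [hadd] at hneu' hm
    refine hboundary (-(1 + ε)) (by ring) hm.symm hneu' fun y h₁ h₂ h₃ => ?_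
    rw [hV]
    exact ⟨h₁, by rwa [neg_neg] at h₃, by rwa [hadd]⟩
  have hint : x ∈ interior V := by
    rw [mem_interior_iff_mem_nhds, hV]
    have hc₁ : Continuous fun y : EuclideanSpace ℝ (Fin n) =>
      ‖y - (1 + ε) • EuclideanSpace.single k (1 : ℝ)‖ := by fun_prop
    have hc₂ : Continuous fun y : EuclideanSpace ℝ (Fin n) =>
      ‖y + (1 + ε) • EuclideanSpace.single k (1 : ℝ)‖ := by fun_prop
    filter_upwards [hnorm_nhds, continuousAt_const.eventually_lt hc₁.continuousAt hp,
      continuousAt_const.eventually_lt hc₂.continuousAt hm] with y h₁ h₂ h₃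
    exact ⟨h₁.le, h₂.le, h₃.le⟩
  obtain ⟨ρ, hρ, hball⟩ := Metric.isOpen_iff.1 isOpen_interior x hint
  have hballV : ball x (3 * (ρ / 3)) ⊆ interior V := by
    rwa [mul_div_cancel₀ ρ three_ne_zero]
  have hcoeff : ∀ c : ℝ, ∑ i : Fin n, (if i = k then c else 1) = n - 1 + c := by
    intro c
    have := sum_ite_mul_eq_sum_erase_add k c fun _ => 1
    simp only [mul_one] at this
    rw [this]
    simp [Nat.cast_sub (by omega : 1 ≤ n)]
  have hn' : (2 : ℝ) ≤ n := by exact_mod_cast hn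
  obtain ⟨y, hy, hlt'⟩ := exists_bernsteinQuantity_lt (u := u)
    (a := fun i => if i = k then -1 else 1) (b := fun i => if i = k then -1 / 2 else 1) (ε := ε)
    (x₀ := x) (r := ρ / 3) (by positivity) hδ
    (hu.mono ((hballV.trans interior_subset).trans hVU)) (fun y hy => hharm y (hballV hy))
    (by rw [hcoeff]; linarith) (by rw [hcoeff]; linarith)
    (fun y hy => by
      have := hlast y (interior_subset (hballV hy))
      have := hT y
      rw [diagQuad_ite]; linarith)
    (fun y hy => by
      have := hlast y (interior_subset (hballV hy))
      have := hT y
      have e : ∑ i, ((if i = k then (-1 : ℝ) else 1) * y i) ^ 2 = ‖y‖ ^ 2 := by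
        rw [EuclideanSpace.real_norm_sq_eq]
        refine Finset.sum_congr rfl fun i _ => ?_
        split_ifs <;> ring
      rw [e, diagQuad_ite, norm_sq_eq_sum_erase_add k]; linarith)
  exact absurd (hx (interior_subset (hballV hy))) (not_le.2 hlt')

end

/-- The maximum-principle form of the Bao–Li–Yin estimate (Theorem 4.1): for `n ≥ 2` there
are constants `c ∈ (0,1/2)`, `ε₀ ∈ (0,1)`, `C > 0`, depending only on `n`, such that for
every `ε ∈ (0,ε₀)` and every `u` which is `C²` on an open set containing the narrow region
`V = {‖x‖ ≤ c} \ (int B⁺ ∪ int B⁻)`, harmonic in the interior of `V`, and satisfying the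
homogeneous Neumann conditions on `∂B⁺ ∩ V` and `∂B⁻ ∩ V`, one has
`(ε + |x'|²) ‖∇u(x)‖² ≤ C · sup{‖∇u(y)‖² + u(y)² : y ∈ V, ‖y‖ = c}` for all `x ∈ V`. -/
theorem bao_li_yin_gradient_estimate (n : ℕ) (hn : 2 ≤ n) :
    ∃ c ε₀ C : ℝ, 0 < c ∧ c < 1 / 2 ∧ 0 < ε₀ ∧ ε₀ < 1 ∧ 0 < C ∧
      ∀ ε : ℝ, 0 < ε → ε < ε₀ →
      ∀ u : EuclideanSpace ℝ (Fin n) → ℝ,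
      ∀ V : Set (EuclideanSpace ℝ (Fin n)),
      V = {x | ‖x‖ ≤ c ∧
            1 ≤ ‖x - (1 + ε) • EuclideanSpace.single (⟨n - 1, by omega⟩ : Fin n) (1 : ℝ)‖ ∧
            1 ≤ ‖x + (1 + ε) • EuclideanSpace.single (⟨n - 1, by omega⟩ : Fin n) (1 : ℝ)‖} →
      (∃ U : Set (EuclideanSpace ℝ (Fin n)), IsOpen U ∧ V ⊆ U ∧ ContDiffOn ℝ 2 u U) →
      (∀ x ∈ interior V,
        ∑ i : Fin n, fderiv ℝ (fun y => fderiv ℝ u y (EuclideanSpace.single i (1 : ℝ))) x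
          (EuclideanSpace.single i (1 : ℝ)) = 0) →
      (∀ x ∈ V, ‖x - (1 + ε) • EuclideanSpace.single (⟨n - 1, by omega⟩ : Fin n) (1 : ℝ)‖ = 1 →
        ⟪gradient u x,
          x - (1 + ε) • EuclideanSpace.single (⟨n - 1, by omega⟩ : Fin n) (1 : ℝ)⟫ = 0) →
      (∀ x ∈ V, ‖x + (1 + ε) • EuclideanSpace.single (⟨n - 1, by omega⟩ : Fin n) (1 : ℝ)‖ = 1 →
        ⟪gradient u x,
          x + (1 + ε) • EuclideanSpace.single (⟨n - 1, by omega⟩ : Fin n) (1 : ℝ)⟫ = 0) →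
      ∀ x ∈ V,
        (ε + ∑ i ∈ Finset.univ.erase (⟨n - 1, by omega⟩ : Fin n), (x i) ^ 2) *
            ‖gradient u x‖ ^ 2 ≤
          C * sSup ((fun y => ‖gradient u y‖ ^ 2 + (u y) ^ 2) '' {y ∈ V | ‖y‖ = c}) := by
  refine ⟨1 / 4, 1 / 4, 12, by norm_num, by norm_num, by norm_num, by norm_num, by norm_num, ?_⟩
  rintro ε hε hε' u V hV ⟨U, hU, hVU, hu⟩ hharm hneu hneu' x hx
  set k : Fin n := ⟨n - 1, by omega⟩
  set S := sSup ((fun y => ‖gradient u y‖ ^ 2 + (u y) ^ 2) '' {y ∈ V | ‖y‖ = 1 / 4}) with hS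
  have hcompact : IsCompact V := hV ▸ isCompact_narrowRegion k ε
  have hgrad : ContinuousOn (fun y => ‖gradient u y‖ ^ 2 + (u y) ^ 2) V := by
    simp only [← sum_sq_fderiv_single]
    refine ContinuousOn.add (continuousOn_finsetSum _ fun j _ y hy => ?_)
      ((hu.continuousOn.mono hVU).pow 2)
    exact ((hu.differentiableAt_fderiv_apply hU (hVU hy) _).continuousAt.pow 2).continuousWithinAt
  have hle : ∀ y ∈ V, ‖y‖ = 1 / 4 → ‖gradient u y‖ ^ 2 + (u y) ^ 2 ≤ S := fun y hy hy' =>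
    le_csSup ((hcompact.bddAbove_image hgrad).mono (Set.image_mono fun z hz => hz.1))
      ⟨y, ⟨hy, hy'⟩, rfl⟩
  have hmem : ∀ y ∈ V, ‖y‖ ≤ 1 / 4 ∧ y k ^ 2 ≤
      (ε + ∑ i ∈ Finset.univ.erase k, y i ^ 2) / 3 := fun y hy => by
    rw [hV] at hy
    exact ⟨hy.1, sq_apply_le_of_mem_narrowRegion hε hε' hy⟩
  have hT : ∀ y : EuclideanSpace ℝ (Fin n), 0 ≤ ∑ i ∈ Finset.univ.erase k, y i ^ 2 :=
    fun y => Finset.sum_nonneg fun i _ => sq_nonneg _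
  have hTle : ∀ y ∈ V, ∑ i ∈ Finset.univ.erase k, y i ^ 2 + y k ^ 2 ≤ 1 / 16 := fun y hy => by
    rw [← norm_sq_eq_sum_erase_add]
    exact (pow_le_pow_left₀ (norm_nonneg _) (hmem y hy).1 2).trans (by norm_num)
  refine le_of_forall_pos_le_add fun δ hδ => ?_
  obtain ⟨z, hzV, hz, hmax⟩ := exists_norm_eq_isMaxOn_bernsteinQuantity (k := k) hn hε hε' hδ hV hU
    hVU hu hharm hneu hneu' ⟨x, hx⟩
  have hxz := hmax hx
  simp only [Set.mem_ofPred_eq, bernsteinQuantity, diagQuad_ite, sum_sq_fderiv_single] at hxz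
  have hSz := hle z hzV hz
  have hFz : (ε + (∑ i ∈ Finset.univ.erase k, z i ^ 2 + -1 * z k ^ 2)) * ‖gradient u z‖ ^ 2 ≤
      8 * ‖gradient u z‖ ^ 2 :=
    mul_le_mul_of_nonneg_right (by linarith [hTle z hzV, sq_nonneg (z k)]) (by positivity)
  have hFx : 2 / 3 * (ε + ∑ i ∈ Finset.univ.erase k, x i ^ 2) * ‖gradient u x‖ ^ 2 ≤
      (ε + (∑ i ∈ Finset.univ.erase k, x i ^ 2 + -1 * x k ^ 2)) * ‖gradient u x‖ ^ 2 :=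
    mul_le_mul_of_nonneg_right (by linarith [(hmem x hx).2]) (by positivity)
  have hwz : δ * (∑ i ∈ Finset.univ.erase k, z i ^ 2 + -1 / 2 * z k ^ 2) ≤ δ * (1 / 16) :=
    mul_le_mul_of_nonneg_left (by linarith [hTle z hzV, sq_nonneg (z k)]) hδ.le
  have hwx : δ * (-1 / 16) ≤ δ * (∑ i ∈ Finset.univ.erase k, x i ^ 2 + -1 / 2 * x k ^ 2) :=
    mul_le_mul_of_nonneg_left (by linarith [hTle x hx, hT x, sq_nonneg (x k)]) hδ.le
  have hux := sq_nonneg (u x)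
  linarith
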